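/- (Exponential cost controllability implies the bound needed for the turnpike theorem.) Let g : X × U → ℝ be a stage cost with g ≥ 0 on Y and g bounded on Y, and suppose there exist constants σ, μ > 0 such that for each x₀ ∈ 𝕏 there is an admissible control u with g(x_u(k,x₀), u(k)) ≤ σ e^{−μk} · inf{g(x₀, û) : (x₀, û) ∈ Y} for all k ∈ ℕ. Then for every discount factor β ∈ (0,1), the optimal value function V of the discounted problem with stage cost g satisfies V(x₀) ≤ C · inf{g(x₀, û) : (x₀, û) ∈ Y} for all x₀ ∈ 𝕏, with C = σ/(1 − e^{−μ}). -/

import Mathlib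

/-!
The control provided by the controllability hypothesis is a competitor in the infimum defining `V`.
Since `β ^ k ≤ 1` and `g ≥ 0` on `Y`, its discounted cost is dominated termwise by the geometric
series `∑ σ m (e^{-μ})^k = σ m / (1 - e^{-μ})`, where `m` is the minimal stage cost at `x₀`.
The same domination gives convergence of the cost series.
-/

open scoped BigOperators

variable {X U : Type*} [NormedAddCommGroup X] [NormedAddCommGroup U]

/-- Trajectory of the controlled system `x(k+1) = f(x(k), u(k))`, `x(0) = x₀`. -/
def traj (f : X → U → X) (x₀ : X) (u : ℕ → U) : ℕ → X
  | 0 => x₀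
  | k + 1 => f (traj f x₀ u k) (u k)

/-- A control sequence is admissible for `x₀` if the state-control pairs stay in `Y`. -/
def Admissible (f : X → U → X) (Y : Set (X × U)) (x₀ : X) (u : ℕ → U) : Prop :=
  ∀ k : ℕ, (traj f x₀ u k, u k) ∈ Y

/-- The state constraint set `𝕏 = {x | ∃ u, (x,u) ∈ Y}`. -/
def stateSet (Y : Set (X × U)) : Set X := {x : X | ∃ u : U, (x, u) ∈ Y}

/-- Discounted infinite-horizon cost functional. -/
noncomputable def Jinf (β : ℝ) (g : X → U → ℝ) (f : X → U → X) (x₀ : X) (u : ℕ → U) : ℝ :=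
  ∑' k : ℕ, β ^ k * g (traj f x₀ u k) (u k)

/-- Optimal value function of the discounted problem. -/
noncomputable def Vinf (β : ℝ) (g : X → U → ℝ) (f : X → U → X) (Y : Set (X × U)) (x₀ : X) : ℝ :=
  sInf {r : ℝ | ∃ u : ℕ → U, Admissible f Y x₀ u ∧ Jinf β g f x₀ u = r}

/-- Rotated stage cost `ℓ̃(x,u) = ℓ(x,u) − ℓ(xe,ue) + λ(x) − βλ(f(x,u))`. -/
def rot (β : ℝ) (g : X → U → ℝ) (f : X → U → X) (lam : X → ℝ) (xe : X) (ue : U)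
    (x : X) (u : U) : ℝ :=
  g x u - g xe ue + lam x - β * lam (f x u)

/-- Class `K∞` comparison functions. -/
structure KInfty (α : ℝ → ℝ) : Prop where
  cont : ContinuousOn α (Set.Ici 0)
  mono : StrictMonoOn α (Set.Ici 0)
  zero : α 0 = 0
  unbounded : ∀ c : ℝ, ∃ r : ℝ, 0 ≤ r ∧ c < α r

/-- exponential cost controllability implies the bound
`V(x₀) ≤ C · inf_u g(x₀,u)` with `C = σ/(1 − e^{−μ})` for every discount factor. -/
theorem exponential_controllability_value_bound
    (f : X → U → X) (Y : Set (X × U)) (g : X → U → ℝ)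
    (hg_nonneg : ∀ p ∈ Y, 0 ≤ g p.1 p.2)
    (hg_bdd : ∃ B : ℝ, ∀ p ∈ Y, |g p.1 p.2| ≤ B)
    (σ μ : ℝ) (hσ : 0 < σ) (hμ : 0 < μ)
    (hctrl : ∀ x₀ ∈ stateSet Y, ∃ u : ℕ → U, Admissible f Y x₀ u ∧
      ∀ k : ℕ, g (traj f x₀ u k) (u k) ≤
        σ * Real.exp (-μ * k) * sInf {r : ℝ | ∃ v : U, (x₀, v) ∈ Y ∧ g x₀ v = r})
    (β : ℝ) (hβ : β ∈ Set.Ioo (0 : ℝ) 1)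
    (x₀ : X) (hx₀ : x₀ ∈ stateSet Y) :
    Vinf β g f Y x₀ ≤
      (σ / (1 - Real.exp (-μ))) * sInf {r : ℝ | ∃ v : U, (x₀, v) ∈ Y ∧ g x₀ v = r} := by
  obtain ⟨u, hu, hle⟩ := hctrl x₀ hx₀
  set m := sInf {r : ℝ | ∃ v : U, (x₀, v) ∈ Y ∧ g x₀ v = r}
  have hgeo : HasSum (fun k : ℕ => σ * m * Real.exp (-μ) ^ k)
      (σ * m * (1 - Real.exp (-μ))⁻¹) :=
    (hasSum_geometric_of_lt_one (Real.exp_pos _).le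
      (Real.exp_lt_one_iff.2 (neg_lt_zero.mpr hμ))).mul_left _
  have hterm : ∀ k : ℕ, β ^ k * g (traj f x₀ u k) (u k) ≤ σ * m * Real.exp (-μ) ^ k := fun k =>
    calc β ^ k * g (traj f x₀ u k) (u k) ≤ g (traj f x₀ u k) (u k) :=
          mul_le_of_le_one_left (hg_nonneg _ (hu k)) (pow_le_one₀ hβ.1.le hβ.2.le)
      _ ≤ σ * Real.exp (-μ * k) * m := hle k
      _ = σ * m * Real.exp (-μ) ^ k := by
          rw [mul_comm (-μ), Real.exp_nat_mul]; ring
  have hnonneg : ∀ v : ℕ → U, Admissible f Y x₀ v →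
      ∀ k : ℕ, 0 ≤ β ^ k * g (traj f x₀ v k) (v k) := fun v hv k =>
    mul_nonneg (pow_nonneg hβ.1.le k) (hg_nonneg _ (hv k))
  have hsum : Summable (fun k : ℕ => β ^ k * g (traj f x₀ u k) (u k)) :=
    Summable.of_nonneg_of_le (hnonneg u hu) hterm hgeo.summable
  -- The infimum of costs is a genuine one: admissible costs are bounded below by `0`.
  have hbdd : BddBelow {r : ℝ | ∃ v : ℕ → U, Admissible f Y x₀ v ∧ Jinf β g f x₀ v = r} := by
    refine ⟨0, ?_⟩
    rintro r ⟨v, hv, rfl⟩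
    exact tsum_nonneg (hnonneg v hv)
  calc Vinf β g f Y x₀ ≤ Jinf β g f x₀ u := csInf_le hbdd ⟨u, hu, rfl⟩
    _ ≤ σ * m * (1 - Real.exp (-μ))⁻¹ := hasSum_le hterm hsum.hasSum hgeo
    _ = σ / (1 - Real.exp (-μ)) * m := by ring
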